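/- Let (A_i, f_{ij})_{i,j ∈ Λ} be a direct system of noetherian rings with direct limit A = lim_{i ∈ Λ} A_i. Assume (a) A is noetherian, (b) each transition morphism f_{ij} (i ≤ j) is flat, and (c) each A_i is an almost Cohen-Macaulay ring. Then A is an almost Cohen-Macaulay ring. Moreover, if instead of (c) each A_i satisfies the condition (C_n) for a fixed natural number n, then A satisfies the condition (C_n). -/

import Mathlib

noncomputable section

open TensorProduct

universe u v w





/-- The depth of the ideal `I` on the module `M`: the supremum of lengths of
`M`-regular sequences with entries in `I`. -/
noncomputable def idealDepth (A : Type u) [CommRing A] (I : Ideal A)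
    (M : Type v) [AddCommGroup M] [Module A M] : ℕ∞ :=
  sSup {n : ℕ∞ | ∃ rs : List A, (rs.length : ℕ∞) = n ∧ (∀ r ∈ rs, r ∈ I) ∧
    RingTheory.Sequence.IsRegular M rs}

/-- The depth of a module over a local ring. -/
noncomputable def localDepth (A : Type u) [CommRing A] [IsLocalRing A]
    (M : Type v) [AddCommGroup M] [Module A M] : ℕ∞ :=
  idealDepth A (IsLocalRing.maximalIdeal A) M

/-- The (Krull) dimension of a module, i.e. the Krull dimension of its support. -/
noncomputable def supportDim (A : Type u) [CommRing A]
    (M : Type v) [AddCommGroup M] [Module A M] : WithBot ℕ∞ :=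
  Order.krullDim (Module.support A M)

/-- `depth (M_P)` : the depth of the localization of `M` at a prime `P`,
over the local ring `A_P`. -/
noncomputable def depthAt (A : Type u) [CommRing A]
    (M : Type v) [AddCommGroup M] [Module A M] (P : PrimeSpectrum A) : ℕ∞ :=
  localDepth (Localization.AtPrime P.asIdeal) (LocalizedModule P.asIdeal.primeCompl M)

/-- `ht_M(P) = dim (M_P)` : the height of a prime `P` in the support of `M`,
i.e. the dimension of the localized module `M_P` over `A_P`. -/
noncomputable def heightAt (A : Type u) [CommRing A]
    (M : Type v) [AddCommGroup M] [Module A M] (P : PrimeSpectrum A) : WithBot ℕ∞ :=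
  supportDim (Localization.AtPrime P.asIdeal) (LocalizedModule P.asIdeal.primeCompl M)

/-- Serre's condition `(S_n)` for a module: for every `P` in the support,
`depth (M_P) ≥ min (n, ht_M(P))`. -/
def SerreCondS (A : Type u) [CommRing A] (n : ℕ)
    (M : Type v) [AddCommGroup M] [Module A M] : Prop :=
  ∀ P ∈ Module.support A M,
    min (n : WithBot ℕ∞) (heightAt A M P) ≤ (depthAt A M P : WithBot ℕ∞)

/-- The condition `(C_n)` for a module: for every `P` in the support,
`depth (M_P) ≥ min (n, ht_M(P)) - 1`, equivalently
`min (n, ht_M(P)) ≤ depth (M_P) + 1`. -/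
def CondC (A : Type u) [CommRing A] (n : ℕ)
    (M : Type v) [AddCommGroup M] [Module A M] : Prop :=
  ∀ P ∈ Module.support A M,
    min (n : WithBot ℕ∞) (heightAt A M P) ≤ (depthAt A M P : WithBot ℕ∞) + 1

/-- A module `M` is almost Cohen-Macaulay if `depth(P, M) = depth (M_P)` for every
`P` in the support of `M` (Kang's definition). -/
def IsAlmostCMModule (A : Type u) [CommRing A]
    (M : Type v) [AddCommGroup M] [Module A M] : Prop :=
  ∀ P ∈ Module.support A M, idealDepth A P.asIdeal M = depthAt A M P

/-- A module `M` is Cohen-Macaulay if `depth (M_P) = dim (M_P)` for every `P` in its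
support. -/
def IsCMModule (A : Type u) [CommRing A]
    (M : Type v) [AddCommGroup M] [Module A M] : Prop :=
  ∀ P ∈ Module.support A M, (depthAt A M P : WithBot ℕ∞) = heightAt A M P

/-- A ring is almost Cohen-Macaulay if it is an almost Cohen-Macaulay module over
itself. -/
abbrev IsAlmostCMRing (A : Type u) [CommRing A] : Prop := IsAlmostCMModule A A

/-- A ring is Cohen-Macaulay if it is a Cohen-Macaulay module over itself, i.e. all its
localizations at primes have depth equal to dimension. -/
abbrev IsCMRing (A : Type u) [CommRing A] : Prop := IsCMModule A A

/-- A ring satisfies `(C_n)` if it does so as a module over itself. -/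
abbrev RingCondC (A : Type u) [CommRing A] (n : ℕ) : Prop := CondC A n A

/-- A ring satisfies `(S_n)` if it does so as a module over itself. -/
abbrev RingSerreCondS (A : Type u) [CommRing A] (n : ℕ) : Prop := SerreCondS A n A

/-!
Let `P` be a prime of the colimit `A` and let `p_i` be its contraction to `G i`. A regular sequence
in `A_P` is a finite list, so it lifts to `(G i)_{p_i}` for some `i`, and there it stays regular
because `(G i)_{p_i} → A_P` is flat and local, hence faithfully flat: thus
`depth A_P ≤ ⨆ i, depth (G i)_{p_i}`. A finite chain of primes below `P` has finitely many strict
inclusions, each witnessed by one element, so it contracts to a strict chain in some `G i`: thus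
`ht P ≤ ⨆ i, ht p_i`. Both properties are upper bounds for a depth or a height that hold at every
`p_i`, and they pass to `P` since depths only grow along the flat maps `G i → A`.
-/

open RingTheory.Sequence IsLocalRing Filter
open Ring.DirectLimit (of)

section Descent

variable {R S : Type*} [CommRing R] [CommRing S]

lemma isWeaklyRegular_of_map_of_faithfullyFlat [Algebra R S] [Module.FaithfullyFlat R S]
    {M : Type*} [AddCommGroup M] [Module R M] {rs : List R}
    (h : IsWeaklyRegular (S ⊗[R] M) (rs.map (algebraMap R S))) : IsWeaklyRegular M rs := by
  induction rs generalizing M with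
  | nil => simp
  | cons r rs ih =>
    rw [List.map_cons, isWeaklyRegular_cons_iff] at h
    obtain ⟨hr, hrs⟩ := h
    have hr' : IsSMulRegular (S ⊗[R] M) r := fun x y hxy ↦ hr (by simpa using hxy)
    refine .cons (hr'.of_injective (TensorProduct.mk R S M 1)
      (Module.FaithfullyFlat.tensorProduct_mk_injective M)) (ih ?_)
    exact ((QuotSMulTop.algebraMapTensorEquivTensorQuotSMulTop r M S).isWeaklyRegular_congr _).mp
      hrs

lemma ringHom_flat_iff_forall_sum_eq_zero {φ : R →+* S} :
    φ.Flat ↔ ∀ {l : ℕ} {a : Fin l → R} {x : Fin l → S}, ∑ t, φ (a t) * x t = 0 →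
      ∃ (n : ℕ) (b : Fin l → Fin n → R) (y : Fin n → S),
        (∀ t, x t = ∑ s, φ (b t s) * y s) ∧ ∀ s, ∑ t, a t * b t s = 0 := by
  let := φ.toAlgebra
  exact Module.Flat.iff_forall_isTrivialRelation

end Descent

section Depth

variable {R : Type u} {S : Type v} [CommRing R] [CommRing S]

lemma idealDepth_congr {M N : Type*} [AddCommGroup M] [AddCommGroup N] [Module R M] [Module R N]
    (e : M ≃ₗ[R] N) (I : Ideal R) : idealDepth R I M = idealDepth R I N := by
  simp only [idealDepth, e.isRegular_congr]

lemma idealDepth_le_of_flat {φ : R →+* S} (hφ : φ.Flat) {I : Ideal R} {J : Ideal S}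
    (hJ : J ≠ ⊤) (hIJ : I ≤ J.comap φ) : idealDepth R I R ≤ idealDepth S J S := by
  algebraize [φ]
  refine sSup_le_sSup ?_
  rintro _ ⟨rs, rfl, hmem, hreg⟩
  have hmem' : ∀ s ∈ rs.map φ, s ∈ J := by
    simpa using fun r hr ↦ hIJ (hmem r hr)
  refine ⟨rs.map φ, by simp, hmem', ⟨hreg.toIsWeaklyRegular.of_flat, fun htop ↦ hJ ?_⟩⟩
  rw [smul_eq_mul, Ideal.mul_top] at htop
  exact top_le_iff.mp (htop.le.trans (Ideal.span_le.mpr hmem'))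

section IsLocalRing

variable [IsLocalRing R] [IsLocalRing S] {φ : R →+* S} [IsLocalHom φ]

lemma localDepth_le_of_flat (hφ : φ.Flat) : localDepth R R ≤ localDepth S S :=
  idealDepth_le_of_flat hφ (maximalIdeal.isMaximal S).ne_top (maximalIdeal_comap φ).ge

lemma length_le_localDepth_of_flat (hφ : φ.Flat) {rs : List R}
    (hmem : ∀ s ∈ rs.map φ, s ∈ maximalIdeal S) (hreg : IsWeaklyRegular S (rs.map φ)) :
    rs.length ≤ localDepth R R := by
  have hmem' : ∀ r ∈ rs, r ∈ maximalIdeal R := fun r hr ↦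
    (map_mem_nonunits_iff φ r).mp (hmem _ (List.mem_map_of_mem hr))
  algebraize [φ]
  have : IsLocalHom (algebraMap R S) := ‹IsLocalHom φ›
  have := Module.FaithfullyFlat.of_flat_of_isLocalHom (A := R) (B := S)
  have hregR : IsWeaklyRegular R rs := isWeaklyRegular_of_map_of_faithfullyFlat
    (((TensorProduct.AlgebraTensorModule.rid R S S).isWeaklyRegular_congr _).mpr hreg)
  exact le_sSup ⟨rs, rfl, hmem', .of_isWeaklyRegular_of_mem_maximalIdeal _ hmem' hregR⟩

end IsLocalRing

/-- The localization of `R` as an `R`-module is the localized ring: this turns the module-theoretic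
depths and heights of `R` into those of the local rings of `R`. -/
def localizedModuleSelfEquiv (T : Submonoid R) :
    LocalizedModule T R ≃ₗ[Localization T] Localization T :=
  (IsLocalizedModule.linearEquiv T (LocalizedModule.mkLinearMap T R)
    (Algebra.linearMap R (Localization T))).extendScalarsOfIsLocalization T (Localization T)

lemma depthAt_self (P : PrimeSpectrum R) :
    depthAt R R P =
      localDepth (Localization.AtPrime P.asIdeal) (Localization.AtPrime P.asIdeal) :=
  idealDepth_congr (localizedModuleSelfEquiv _) _

lemma heightAt_self (P : PrimeSpectrum R) : heightAt R R P = P.asIdeal.height := by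
  rw [← IsLocalization.AtPrime.ringKrullDim_eq_height P.asIdeal (Localization.AtPrime P.asIdeal),
    ← Module.supportDim_self_eq_ringKrullDim]
  exact Module.supportDim_eq_of_equiv (localizedModuleSelfEquiv _)

lemma mem_support_self (P : PrimeSpectrum R) : P ∈ Module.support R R := by
  simp [Module.mem_support_iff_of_finite, Module.annihilator_eq_bot.mpr]

lemma idealDepth_le_depthAt (P : PrimeSpectrum R) :
    idealDepth R P.asIdeal R ≤ depthAt R R P := by
  rw [depthAt_self]
  exact idealDepth_le_of_flat (φ := algebraMap R (Localization.AtPrime P.asIdeal))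
    (RingHom.flat_algebraMap_iff.mpr inferInstance) (maximalIdeal.isMaximal _).ne_top
    (Localization.AtPrime.under_maximalIdeal (I := P.asIdeal)).ge

/-- The homomorphism `R_p → S_P` induced by `φ : R →+* S`, where `p` is the contraction of `P`. -/
abbrev localRingHomAt (φ : R →+* S) (P : PrimeSpectrum S) :
    Localization.AtPrime (P.comap φ).asIdeal →+* Localization.AtPrime P.asIdeal :=
  Localization.localRingHom _ P.asIdeal φ (P.comap_asIdeal φ)

lemma localRingHomAt_flat {φ : R →+* S} (hφ : φ.Flat) (P : PrimeSpectrum S) :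
    (localRingHomAt φ P).Flat :=
  hφ.localRingHom _ _ _

lemma depthAt_comap_le_of_flat {φ : R →+* S} (hφ : φ.Flat) (P : PrimeSpectrum S) :
    depthAt R R (P.comap φ) ≤ depthAt S S P := by
  rw [depthAt_self, depthAt_self]
  exact localDepth_le_of_flat (localRingHomAt_flat hφ P)

lemma isAlmostCMRing_iff_depthAt_le :
    IsAlmostCMRing R ↔ ∀ P : PrimeSpectrum R, depthAt R R P ≤ idealDepth R P.asIdeal R :=
  ⟨fun h P ↦ (h P (mem_support_self P)).ge, fun h P _ ↦ (idealDepth_le_depthAt P).antisymm (h P)⟩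

lemma ringCondC_iff_min_height_le {n : ℕ} :
    RingCondC R n ↔
      ∀ P : PrimeSpectrum R, min (n : ℕ∞) P.asIdeal.height ≤ depthAt R R P + 1 := by
  simp only [RingCondC, CondC, mem_support_self, forall_const, heightAt_self]
  exact forall_congr' fun P ↦ WithBot.coe_le_coe (a := min (n : ℕ∞) P.asIdeal.height)

end Depth

section DirectLimit

variable {ι : Type*} [Preorder ι] [IsDirected ι (· ≤ ·)] [Nonempty ι] {G : ι → Type*}
  [∀ i, CommRing (G i)] {f : ∀ i j, i ≤ j → G i →+* G j}

lemma eventually_subset_range_of {s : Set (Ring.DirectLimit G (f · · ·))} (hs : s.Finite) :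
    ∀ᶠ i in atTop, s ⊆ Set.range (of G (f · · ·) i) := by
  refine (eventually_all_finite hs).mpr fun z _ ↦ ?_
  obtain ⟨i, x, rfl⟩ := Ring.DirectLimit.exists_of z
  filter_upwards [eventually_ge_atTop i] with j hij
  exact ⟨f i j hij x, Ring.DirectLimit.of_f hij x⟩

lemma directLimit_flat_of [DirectedSystem G (f · · ·)]
    (hflat : ∀ i j (h : i ≤ j), (f i j h).Flat) (i : ι) : (of G (f · · ·) i).Flat := by
  refine ringHom_flat_iff_forall_sum_eq_zero.mpr fun {l} a x hx ↦ ?_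
  obtain ⟨j, hxj, hij⟩ :=
    ((eventually_subset_range_of (Set.finite_range x)).and (eventually_ge_atTop i)).exists
  choose y hy using fun t ↦ hxj ⟨t, rfl⟩
  have hzero : of G (f · · ·) j (∑ t, f i j hij (a t) * y t) = 0 := by
    simpa [hy] using hx
  obtain ⟨k, hjk, hk⟩ := Ring.DirectLimit.of.zero_exact hzero
  have hrel : ∑ t, f i k (hij.trans hjk) (a t) * f j k hjk (y t) = 0 := by
    simpa [DirectedSystem.map_map' f hij hjk] using hk
  obtain ⟨n, b, z, hz, hb⟩ :=
    ringHom_flat_iff_forall_sum_eq_zero.mp (hflat i k (hij.trans hjk)) hrel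
  refine ⟨n, b, fun s ↦ of G (f · · ·) k (z s), fun t ↦ ?_, hb⟩
  rw [← hy, ← Ring.DirectLimit.of_f hjk, hz]
  simp

variable (P : PrimeSpectrum (Ring.DirectLimit G (f · · ·)))

lemma exists_list_map_localRingHomAt_eq (rs : List (Localization.AtPrime P.asIdeal)) :
    ∃ (i : ι) (ss : List (Localization.AtPrime (P.comap (of G (f · · ·) i)).asIdeal)),
      ss.map (localRingHomAt (of G (f · · ·) i) P) = rs := by
  choose a s hmk using IsLocalization.exists_mk'_eq P.asIdeal.primeCompl
    (S := Localization.AtPrime P.asIdeal)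
  obtain ⟨i, ha, hs⟩ := ((eventually_subset_range_of (rs.finite_toSet.image a)).and
    (eventually_subset_range_of (rs.finite_toSet.image fun r ↦ (s r).1))).exists
  refine ⟨i, Set.mem_range.mp (Set.range_list_map _ ▸ fun r hr ↦ ?_)⟩
  obtain ⟨x, hx⟩ := ha ⟨r, hr, rfl⟩
  obtain ⟨y, hy⟩ := hs ⟨r, hr, rfl⟩
  have hyP : y ∈ (P.comap (of G (f · · ·) i)).asIdeal.primeCompl := fun h ↦
    (s r).2 (by simpa [hy] using h)
  refine ⟨IsLocalization.mk' _ x ⟨y, hyP⟩, ?_⟩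
  simp only [Localization.localRingHom_mk', hx, hy, hmk]

lemma depthAt_le_iSup_depthAt_comap (hof : ∀ i, (of G (f · · ·) i).Flat) :
    depthAt _ (Ring.DirectLimit G (f · · ·)) P ≤
      ⨆ i, depthAt (G i) (G i) (P.comap (of G (f · · ·) i)) := by
  rw [depthAt_self]
  refine sSup_le ?_
  rintro _ ⟨rs, rfl, hmem, hreg⟩
  obtain ⟨i, ss, rfl⟩ := exists_list_map_localRingHomAt_eq P rs
  refine le_iSup_of_le i ?_
  rw [depthAt_self, List.length_map]
  exact length_le_localDepth_of_flat (localRingHomAt_flat (hof i) P) hmem hreg.toIsWeaklyRegular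

lemma exists_strictMono_comap_of (c : LTSeries (PrimeSpectrum (Ring.DirectLimit G (f · · ·)))) :
    ∃ i, StrictMono fun k ↦ (c k).comap (of G (f · · ·) i) := by
  choose x hx hx' using fun k ↦ Set.exists_of_ssubset (c.step k)
  obtain ⟨i, hi⟩ := (eventually_subset_range_of (Set.finite_range x)).exists
  choose y hy using fun k ↦ hi ⟨k, rfl⟩
  refine ⟨i, Fin.strictMono_iff_lt_succ.mpr fun k ↦
    lt_of_le_not_ge (Ideal.comap_mono (c.step k).le) fun hle ↦ hx' k ?_⟩
  have hyk : of G (f · · ·) i (y k) ∈ (c k.succ).asIdeal := (hy k).symm ▸ hx k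
  exact hy k ▸ hle hyk

lemma height_le_iSup_height_comap :
    P.asIdeal.height ≤ ⨆ i, (P.comap (of G (f · · ·) i)).asIdeal.height := by
  simp only [PrimeSpectrum.height_eq_orderHeight]
  refine Order.height_le fun c hc ↦ ?_
  obtain ⟨i, hi⟩ := exists_strictMono_comap_of c
  exact le_iSup_of_le i (Order.length_le_height (p := LTSeries.mk c.length _ hi) (hc ▸ le_rfl))

end DirectLimit

theorem directLimit_almostCM_and_condC_general (ι : Type*) [Preorder ι] [IsDirected ι (· ≤ ·)]
    [Nonempty ι] (G : ι → Type*) [∀ i, CommRing (G i)] (f : ∀ i j, i ≤ j → G i →+* G j)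
    [DirectedSystem G (f · · ·)] (hflat : ∀ i j (h : i ≤ j), (f i j h).Flat) :
    ((∀ i, IsAlmostCMRing (G i)) → IsAlmostCMRing (Ring.DirectLimit G (f · · ·))) ∧
    (∀ n : ℕ, (∀ i, RingCondC (G i) n) → RingCondC (Ring.DirectLimit G (f · · ·)) n) := by
  have hof := directLimit_flat_of hflat
  simp only [isAlmostCMRing_iff_depthAt_le, ringCondC_iff_min_height_le]
  refine ⟨fun hCM P ↦ (depthAt_le_iSup_depthAt_comap P hof).trans (iSup_le fun i ↦ ?_),
    fun n hC P ↦ ?_⟩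
  · exact (hCM i _).trans (idealDepth_le_of_flat (hof i) P.isPrime.ne_top le_rfl)
  · calc min (n : ℕ∞) P.asIdeal.height
        ≤ min (n : ℕ∞) (⨆ i, (P.comap (of G (f · · ·) i)).asIdeal.height) :=
          min_le_min_left _ (height_le_iSup_height_comap P)
      _ = ⨆ i, min (n : ℕ∞) (P.comap (of G (f · · ·) i)).asIdeal.height := inf_iSup_eq _ _
      _ ≤ depthAt _ _ P + 1 := iSup_le fun i ↦
          (hC i _).trans (add_le_add_left (depthAt_comap_le_of_flat (hof i) P) 1)

theorem directLimit_almostCM_and_condC (ι : Type u) [Preorder ι] [IsDirected ι (· ≤ ·)]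
    [Nonempty ι] (G : ι → Type v) [∀ i, CommRing (G i)] [∀ i, IsNoetherianRing (G i)]
    (f : ∀ i j, i ≤ j → G i →+* G j)
    [DirectedSystem G (fun i j h => ⇑(f i j h))]
    [IsNoetherianRing (Ring.DirectLimit G (fun i j h => f i j h))]
    (hflat : ∀ (i j : ι) (h : i ≤ j), (f i j h).Flat) :
    ((∀ i, IsAlmostCMRing (G i)) →
      IsAlmostCMRing (Ring.DirectLimit G (fun i j h => f i j h))) ∧
    (∀ n : ℕ, (∀ i, RingCondC (G i) n) →
      RingCondC (Ring.DirectLimit G (fun i j h => f i j h)) n) :=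
  directLimit_almostCM_and_condC_general ι G f hflat

end
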